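/- Let I ⊆ N be nonempty and independent, and let J ⊆ N satisfy |J ∩ N_j| ≤ 1 for every j ∈ I. Then J is independent. -/

import Mathlib

/-- Independence in the laminar matroid on `N = {1, …, n}` given by the interval family `𝓛`
with bounds `b`: a set `I ⊆ N` is independent if `|I ∩ L| ≤ b L` for every `L ∈ 𝓛`. -/
def LamIndep (n : ℕ) (𝓛 : Set (Set ℕ)) (b : Set ℕ → ℕ) (I : Set ℕ) : Prop :=
  I ⊆ Set.Icc 1 n ∧ ∀ L ∈ 𝓛, (I ∩ L).ncard ≤ b L

/-!
If `L` meets `I`, then the smallest member containing a point of `L` and meeting `I` lies inside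
`L`, so `rep` maps `J ∩ L` injectively into `I ∩ L`. If `L` misses `I`, then by laminarity the
members meeting `I` that contain a given point of `L` contain all of `L`, and by convexity no point
of `I` separates two points of `L`. Hence `rep` is constant on `L`, which therefore meets `J` in at
most one point.
-/

open Set

section LaminarRepresentatives

variable {α : Type*}

/-- A family of sets is laminar if any two members are nested or disjoint. -/
def IsLaminar (𝓛 : Set (Set α)) : Prop :=
  ∀ L ∈ 𝓛, ∀ L' ∈ 𝓛, L ⊆ L' ∨ L' ⊆ L ∨ Disjoint L L'

/-- The capacity constraints of a laminar matroid. Cardinalities and capacities are extended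
natural numbers, so that infinite sets are not counted as having size `0`. -/
def RespectsCapacities (𝓛 : Set (Set α)) (b : Set α → ℕ∞) (I : Set α) : Prop :=
  ∀ L ∈ 𝓛, (I ∩ L).encard ≤ b L

/-- The members of `𝓛` that compete to be the smallest one containing `i` and meeting `I`. -/
def membersMeeting (𝓛 : Set (Set α)) (I : Set α) (i : α) : Set (Set α) :=
  {L ∈ 𝓛 | i ∈ L ∧ (L ∩ I).Nonempty}

theorem IsLaminar.subset_of_disjoint {𝓛 : Set (Set α)} (h𝓛 : IsLaminar 𝓛) {L M I : Set α}
    (hL : L ∈ 𝓛) (hLI : Disjoint L I) {i : α} (hi : i ∈ L) (hM : M ∈ membersMeeting 𝓛 I i) :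
    L ⊆ M := by
  obtain ⟨hM, hiM, hMI⟩ := hM
  rcases h𝓛 L hL M hM with hLM | hML | hdisj
  · exact hLM
  · exact absurd (hLI.mono_left hML) (not_disjoint_iff_nonempty_inter.2 hMI)
  · exact absurd hiM (disjoint_left.1 hdisj hi)

theorem IsLaminar.membersMeeting_eq {𝓛 : Set (Set α)} (h𝓛 : IsLaminar 𝓛) {L I : Set α}
    (hL : L ∈ 𝓛) (hLI : Disjoint L I) {i i' : α} (hi : i ∈ L) (hi' : i' ∈ L) :
    membersMeeting 𝓛 I i = membersMeeting 𝓛 I i' :=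
  Subset.antisymm
    (fun _ hM ↦ ⟨hM.1, h𝓛.subset_of_disjoint hL hLI hi hM hi', hM.2.2⟩)
    (fun _ hM ↦ ⟨hM.1, h𝓛.subset_of_disjoint hL hLI hi' hM hi, hM.2.2⟩)

variable [LinearOrder α]

theorem inter_Iic_eq_of_ordConnected {L S : Set α} (hL : L.OrdConnected) (hLS : Disjoint L S)
    {i i' : α} (hi : i ∈ L) (hi' : i' ∈ L) : S ∩ Iic i = S ∩ Iic i' := by
  have le_of_le {x y j : α} (hx : x ∈ L) (hy : y ∈ L) (hj : j ∈ S) (hjx : j ≤ x) : j ≤ y := by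
    by_contra! hyj
    exact disjoint_left.1 hLS (hL.out hy hx ⟨hyj.le, hjx⟩) hj
  ext j
  exact and_congr_right fun hj ↦ ⟨le_of_le hi hi' hj, le_of_le hi' hi hj⟩

/-- `j` is the largest element of `S` that is `≤ i`, or, if there is none, the least element
of `S`, all of whose elements are then `> i`. -/
def IsFloorElseCeil (S : Set α) (i j : α) : Prop :=
  IsGreatest (S ∩ Iic i) j ∨ S ∩ Iic i = ∅ ∧ IsLeast S j

theorem isFloorElseCeil_of_imp {S : Set α} {i j : α}
    (hfloor : (∃ k ∈ S, k ≤ i) → j ∈ S ∧ j ≤ i ∧ ∀ k ∈ S, k ≤ i → k ≤ j)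
    (hceil : (¬ ∃ k ∈ S, k ≤ i) → j ∈ S ∧ ∀ k ∈ S, i < k → j ≤ k) :
    IsFloorElseCeil S i j := by
  by_cases hbelow : ∃ k ∈ S, k ≤ i
  · obtain ⟨hjS, hji, hmax⟩ := hfloor hbelow
    exact .inl ⟨⟨hjS, hji⟩, fun k hk ↦ hmax k hk.1 hk.2⟩
  · obtain ⟨hjS, hmin⟩ := hceil hbelow
    have habove : ∀ k ∈ S, i < k := by simpa only [not_exists, not_and, not_le] using hbelow
    exact .inr ⟨eq_empty_of_forall_notMem fun k hk ↦ (habove k hk.1).not_ge hk.2,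
      hjS, fun k hk ↦ hmin k hk (habove k hk)⟩

theorem IsFloorElseCeil.mem {S : Set α} {i j : α} (h : IsFloorElseCeil S i j) : j ∈ S :=
  h.elim (fun h ↦ h.1.1) (fun h ↦ h.2.1)

theorem IsFloorElseCeil.unique {S : Set α} {i j j' : α} (h : IsFloorElseCeil S i j)
    (h' : IsFloorElseCeil S i j') : j = j' := by
  rcases h with hj | ⟨hempty, hj⟩ <;> rcases h' with hj' | ⟨hempty', hj'⟩
  · exact hj.unique hj'
  · exact absurd hempty' hj.nonempty.ne_empty
  · exact absurd hempty hj'.nonempty.ne_empty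
  · exact hj.unique hj'

/-- `j` represents `i` in `I`, i.e. `i` lies in the class `N_j`: the witness `M` is the smallest
member `L_i` of `𝓛` that contains `i` and meets `I`. -/
def IsRep (𝓛 : Set (Set α)) (I : Set α) (i j : α) : Prop :=
  ∃ M, IsLeast (membersMeeting 𝓛 I i) M ∧ IsFloorElseCeil (M ∩ I) i j

namespace IsRep

variable {𝓛 : Set (Set α)} {I L : Set α} {i i' j j' : α}

theorem mem (h : IsRep 𝓛 I i j) : j ∈ I :=
  let ⟨_, _, hj⟩ := h
  hj.mem.2

theorem mem_of_mem (h : IsRep 𝓛 I i j) (hL : L ∈ 𝓛) (hi : i ∈ L) (hLI : (L ∩ I).Nonempty) :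
    j ∈ L :=
  let ⟨_, hM, hj⟩ := h
  hM.2 ⟨hL, hi, hLI⟩ hj.mem.1

theorem eq_of_disjoint (h𝓛 : IsLaminar 𝓛) (hL : L ∈ 𝓛) (hconv : L.OrdConnected)
    (hLI : Disjoint L I) (hi : i ∈ L) (hi' : i' ∈ L) (h : IsRep 𝓛 I i j)
    (h' : IsRep 𝓛 I i' j') : j = j' := by
  obtain ⟨M, hM, hj⟩ := h
  obtain ⟨M', hM', hj'⟩ := h'
  rw [← h𝓛.membersMeeting_eq hL hLI hi hi'] at hM'
  obtain rfl : M = M' := hM.unique hM'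
  have hbelow : M ∩ I ∩ Iic i = M ∩ I ∩ Iic i' :=
    inter_Iic_eq_of_ordConnected hconv (hLI.mono_right inter_subset_right) hi hi'
  rw [IsFloorElseCeil, ← hbelow] at hj'
  exact hj.unique hj'

theorem injOn_of_encard_class_le_one {J : Set α} {rep : α → α}
    (hrep : ∀ i ∈ J, IsRep 𝓛 I i (rep i))
    (hJ : ∀ j ∈ I, (J ∩ {i | rep i = j}).encard ≤ 1) : InjOn rep J := fun i hi _ hi' heq ↦
  encard_le_one_iff_subsingleton.1 (hJ (rep i) (hrep i hi).mem) ⟨hi, rfl⟩ ⟨hi', heq.symm⟩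

end IsRep

theorem indep_of_le_one_per_class_general {𝓛 : Set (Set α)} (hlam : IsLaminar 𝓛)
    (hconv : ∀ L ∈ 𝓛, L.OrdConnected) {I J : Set α} {rep : α → α}
    (hrep : ∀ i ∈ J, IsRep 𝓛 I i (rep i)) {b : Set α → ℕ∞} (hb : ∀ L ∈ 𝓛, 1 ≤ b L)
    (hI : RespectsCapacities 𝓛 b I) (hJ : ∀ j ∈ I, (J ∩ {i | rep i = j}).encard ≤ 1) :
    RespectsCapacities 𝓛 b J := by
  intro L hL
  have hinj : InjOn rep (J ∩ L) :=
    (IsRep.injOn_of_encard_class_le_one hrep hJ).mono inter_subset_left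
  by_cases hLI : Disjoint L I
  · have hsub : (J ∩ L).Subsingleton := fun i hi i' hi' ↦ hinj hi hi' <|
      IsRep.eq_of_disjoint hlam hL (hconv L hL) hLI hi.2 hi'.2 (hrep i hi.1) (hrep i' hi'.1)
    exact (encard_le_one_iff_subsingleton.2 hsub).trans (hb L hL)
  · have hmaps : MapsTo rep (J ∩ L) (I ∩ L) := fun i hi ↦ ⟨(hrep i hi.1).mem,
      (hrep i hi.1).mem_of_mem hL hi.2 (not_disjoint_iff_nonempty_inter.1 hLI)⟩
    exact (encard_le_encard_of_injOn hmaps hinj).trans (hI L hL)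

end LaminarRepresentatives

theorem lamIndep_iff {n : ℕ} {𝓛 : Set (Set ℕ)} {b : Set ℕ → ℕ} {I : Set ℕ} :
    LamIndep n 𝓛 b I ↔ I ⊆ Icc 1 n ∧ RespectsCapacities 𝓛 (fun L ↦ b L) I := by
  refine and_congr_right fun hI ↦ forall₂_congr fun L _ ↦ ?_
  rw [← (((finite_Icc 1 n).subset hI).inter_of_left L).cast_ncard_eq, Nat.cast_le]

theorem encard_class_le_one_of_ncard {n : ℕ} {J : Set ℕ} (hJ : J ⊆ Icc 1 n) {rep : ℕ → ℕ} {j : ℕ}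
    (hcard : (J ∩ {i | i ∈ Icc 1 n ∧ rep i = j}).ncard ≤ 1) :
    (J ∩ {i | rep i = j}).encard ≤ 1 := by
  have hclass : J ∩ {i | i ∈ Icc 1 n ∧ rep i = j} = J ∩ {i | rep i = j} :=
    Set.ext fun i ↦ and_congr_right fun hi ↦ and_iff_right (hJ hi)
  rw [hclass] at hcard
  rw [← (((finite_Icc 1 n).subset hJ).inter_of_left _).cast_ncard_eq]
  exact_mod_cast hcard

/-- If `I` is a nonempty independent set and `J ⊆ N` picks at most one element from each class
`N_j = {i ∈ N : rep i = j}`, `j ∈ I`, then `J` is independent. Here `Lf i` is the smallest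
member of `𝓛` containing `i` and meeting `I`, and `rep i` is the largest element of `Lf i ∩ I`
that is `≤ i` if one exists, and the smallest element of `Lf i ∩ I` that is `> i` otherwise. -/
theorem indep_of_le_one_per_class
    (n : ℕ) (hn : 1 ≤ n)
    (𝓛 : Set (Set ℕ)) (h𝓛fin : 𝓛.Finite)
    (h𝓛 : ∀ L ∈ 𝓛, L.Nonempty ∧ L ⊆ Set.Icc 1 n ∧ ∃ p q : ℕ, L = Set.Icc p q)
    (hlam : ∀ L ∈ 𝓛, ∀ L' ∈ 𝓛, L ⊆ L' ∨ L' ⊆ L ∨ Disjoint L L')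
    (hN : Set.Icc 1 n ∈ 𝓛)
    (I : Set ℕ) (hI : I ⊆ Set.Icc 1 n) (hIne : I.Nonempty)
    (Lf : ℕ → Set ℕ)
    (hLf : ∀ i ∈ Set.Icc 1 n, Lf i ∈ 𝓛 ∧ i ∈ Lf i ∧ (Lf i ∩ I).Nonempty ∧
      ∀ L ∈ 𝓛, i ∈ L → (L ∩ I).Nonempty → Lf i ⊆ L)
    (rep : ℕ → ℕ)
    (hrep₁ : ∀ i ∈ Set.Icc 1 n, (∃ j ∈ Lf i ∩ I, j ≤ i) →
      rep i ∈ Lf i ∩ I ∧ rep i ≤ i ∧ ∀ j ∈ Lf i ∩ I, j ≤ i → j ≤ rep i)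
    (hrep₂ : ∀ i ∈ Set.Icc 1 n, (¬ ∃ j ∈ Lf i ∩ I, j ≤ i) →
      rep i ∈ Lf i ∩ I ∧ i < rep i ∧ ∀ j ∈ Lf i ∩ I, i < j → rep i ≤ j)
    (b : Set ℕ → ℕ) (hb : ∀ L ∈ 𝓛, 1 ≤ b L)
    (hIind : LamIndep n 𝓛 b I)
    (J : Set ℕ) (hJ : J ⊆ Set.Icc 1 n)
    (hJcard : ∀ j ∈ I, (J ∩ {i | i ∈ Set.Icc 1 n ∧ rep i = j}).ncard ≤ 1) :
    LamIndep n 𝓛 b J := by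
  have hconv : ∀ L ∈ 𝓛, L.OrdConnected := fun L hL ↦ by
    obtain ⟨-, -, p, q, rfl⟩ := h𝓛 L hL
    exact ordConnected_Icc
  have hIsRep : ∀ i ∈ J, IsRep 𝓛 I i (rep i) := fun i hi ↦
    have ⟨hmem, hiL, hne, hmin⟩ := hLf i (hJ hi)
    ⟨Lf i, ⟨⟨hmem, hiL, hne⟩, fun L hL ↦ hmin L hL.1 hL.2.1 hL.2.2⟩,
      isFloorElseCeil_of_imp (hrep₁ i (hJ hi)) fun hnone ↦
        (hrep₂ i (hJ hi) hnone).imp_right And.right⟩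
  exact lamIndep_iff.2 ⟨hJ, indep_of_le_one_per_class_general hlam hconv hIsRep
    (fun L hL ↦ by exact_mod_cast hb L hL) (lamIndep_iff.1 hIind).2
    fun j hj ↦ encard_class_le_one_of_ncard hJ (hJcard j hj)⟩
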